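/- The SR transformation is complete for every U-WLL DCTRS R: for all terms s, t ∈ T(F,V), if s →*_R t, then ⟨s̄⟩ →*_{SR(R)} ⟨t̄⟩. -/

import Mathlib

set_option autoImplicit false

/-- First-order terms over a signature `F` and variables `V`. -/
inductive Term (F : Type) (V : Type) : Type where
  | var : V → Term F V
  | app : F → List (Term F V) → Term F V

namespace Term

variable {F V G W : Type}

/-- Application of a substitution. -/
def subst (σ : V → Term F W) : Term F V → Term F W
  | .var x => σ x
  | .app f ts => .app f (ts.attach.map (fun ⟨t, _⟩ => subst σ t))

/-- Renaming of variables. -/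
def rename (g : V → W) (t : Term F V) : Term F W := t.subst (fun x => .var (g x))

/-- Mapping of function symbols. -/
def mapF (g : F → G) : Term F V → Term G V
  | .var x => .var x
  | .app f ts => .app (g f) (ts.attach.map (fun ⟨t, _⟩ => mapF g t))

/-- Number of occurrences of the variable `x` in a term. -/
def count [DecidableEq V] (x : V) : Term F V → ℕ
  | .var y => if y = x then 1 else 0
  | .app _ ts => (ts.attach.map (fun ⟨t, _⟩ => count x t)).sum

/-- The list of variables occurring in a term (with repetitions). -/
def varList : Term F V → List V
  | .var x => [x]
  | .app _ ts => ts.attach.flatMap (fun ⟨t, _⟩ => varList t)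

/-- A term is linear if every variable occurs at most once in it. -/
def Linear [DecidableEq V] (t : Term F V) : Prop := ∀ x : V, t.count x ≤ 1

/-- Well-formedness of a term with respect to an arity assignment. -/
inductive WF (ar : F → ℕ) : Term F V → Prop where
  | var (x : V) : WF ar (.var x)
  | app (f : F) (ts : List (Term F V)) :
      ts.length = ar f → (∀ t ∈ ts, WF ar t) → WF ar (.app f ts)

end Term

/-- Number of occurrences of `x` in a sequence of terms. -/
def seqCount {F V : Type} [DecidableEq V] (x : V) (ts : List (Term F V)) : ℕ :=
  (ts.map (Term.count x)).sum

/-- An oriented conditional rewrite rule `l → r ⇐ s1 ≈ t1, …, sk ≈ tk`. -/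
structure CRule (F V : Type) : Type where
  lhs : Term F V
  rhs : Term F V
  conds : List (Term F V × Term F V)

/-- A conditional term rewriting system: a set of conditional rules. -/
abbrev CTRS (F V : Type) := Set (CRule F V)

namespace CRule

variable {F V W : Type}

/-- The sequence `l, t1, …, tk` of "pattern" terms of a rule. -/
def pats (ρ : CRule F V) : List (Term F V) := ρ.lhs :: ρ.conds.map Prod.snd

/-- The sequence `r, s1, …, sk` of "source" terms of a rule. -/
def srcs (ρ : CRule F V) : List (Term F V) := ρ.rhs :: ρ.conds.map Prod.fst

/-- Weak left-linearity: `|l,t1,…,tk|_x = 1` for every `x ∈ Var(r,s1,…,sk)`. -/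
def WLL [DecidableEq V] (ρ : CRule F V) : Prop :=
  ∀ x : V, 0 < seqCount x ρ.srcs → seqCount x ρ.pats = 1

/-- Determinism: `Var(si) ⊆ Var(l, t1, …, t_{i−1})`. -/
def Det [DecidableEq V] (ρ : CRule F V) : Prop :=
  ∀ i : ℕ, ∀ h : i < ρ.conds.length, ∀ x : V,
    0 < Term.count x (ρ.conds.get ⟨i, h⟩).1 →
    0 < seqCount x (ρ.lhs :: (ρ.conds.take i).map Prod.snd)

/-- Type 3: `Var(r) ⊆ Var(l, s1, t1, …, sk, tk)`. -/
def Type3 [DecidableEq V] (ρ : CRule F V) : Prop :=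
  ∀ x : V, 0 < Term.count x ρ.rhs →
    0 < seqCount x (ρ.lhs :: ρ.conds.flatMap (fun c => [c.1, c.2]))

/-- The left-hand side is a non-variable term. -/
def LhsNonVar (ρ : CRule F V) : Prop := ∀ x : V, ρ.lhs ≠ .var x

/-- Renaming the variables of a rule. -/
def mapV (g : V → W) (ρ : CRule F V) : CRule F W :=
  ⟨ρ.lhs.rename g, ρ.rhs.rename g, ρ.conds.map (fun c => (c.1.rename g, c.2.rename g))⟩

end CRule

/-- `R` is a deterministic CTRS (of Type 3, left-hand sides non-variable). -/
def IsDCTRS {F V : Type} [DecidableEq V] (R : CTRS F V) : Prop :=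
  ∀ ρ ∈ R, ρ.Det ∧ ρ.Type3 ∧ ρ.LhsNonVar

/-- All rules of `R` are weakly left-linear. -/
def IsWLL {F V : Type} [DecidableEq V] (R : CTRS F V) : Prop := ∀ ρ ∈ R, ρ.WLL

/-- Closure of a relation under contexts (rewriting below the root). -/
inductive CtxStep {F V : Type} (root : Term F V → Term F V → Prop) :
    Term F V → Term F V → Prop where
  | root {s t : Term F V} : root s t → CtxStep root s t
  | congr {f : F} {pre post : List (Term F V)} {s t : Term F V} :
      CtxStep root s t →
      CtxStep root (.app f (pre ++ s :: post)) (.app f (pre ++ t :: post))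

/-- A root rewrite step using a rule of `R`, conditions evaluated with `prev`. -/
def RootStep {F V : Type} (R : CTRS F V) (prev : Term F V → Term F V → Prop)
    (s t : Term F V) : Prop :=
  ∃ ρ ∈ R, ∃ σ : V → Term F V,
    s = ρ.lhs.subst σ ∧ t = ρ.rhs.subst σ ∧
    ∀ c ∈ ρ.conds, Relation.ReflTransGen prev (c.1.subst σ) (c.2.subst σ)

/-- The level-stratified reduction relation `→_{(n),R}`. -/
def LevelStep {F V : Type} (R : CTRS F V) : ℕ → Term F V → Term F V → Prop
  | 0 => fun _ _ => False
  | n + 1 => CtxStep (RootStep R (LevelStep R n))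

/-- The reduction relation `→_R = ⋃_{n} →_{(n),R}`. -/
def Red {F V : Type} (R : CTRS F V) (s t : Term F V) : Prop :=
  ∃ n : ℕ, LevelStep R n s t

/-- Many-step reduction `→*_R`. -/
def RedStar {F V : Type} (R : CTRS F V) : Term F V → Term F V → Prop :=
  Relation.ReflTransGen (Red R)

/-- `n`-fold composition of a relation. -/
def NFold {α : Type} (r : α → α → Prop) : ℕ → α → α → Prop
  | 0 => fun a b => a = b
  | n + 1 => fun a c => ∃ b, r a b ∧ NFold r n b c

/-- One-hole contexts. -/
inductive Ctx (F V : Type) : Type where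
  | hole : Ctx F V
  | app : F → List (Term F V) → Ctx F V → List (Term F V) → Ctx F V

/-- Filling the hole of a context with a term. -/
def Ctx.fill {F V : Type} : Ctx F V → Term F V → Term F V
  | .hole, t => t
  | .app f pre C post, t => .app f (pre ++ C.fill t :: post)
/-- Signature extended with the fresh symbols `U^ρ_i`. -/
abbrev UF (F V : Type) := F ⊕ (CRule F V × ℕ)

/-- Embedding of terms over `F` into terms over the extended signature `U_R(F)`. -/
def liftF {F V : Type} (t : Term F V) : Term (UF F V) V := t.mapF Sum.inl

/-- The list `X⃗_i` enumerating `Var(l, t1, …, t_{i−1})` in a fixed order. -/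
def Xlist {F V : Type} [DecidableEq V] (ρ : CRule F V) (i : ℕ) : List V :=
  (ρ.lhs.varList ++ ((ρ.conds.take (i - 1)).map Prod.snd).flatMap Term.varList).dedup

/-- A dummy condition (used as a default, never relevant). -/
def dummyCond {F V : Type} (ρ : CRule F V) : Term F V × Term F V := (ρ.lhs, ρ.lhs)

/-- The term `U^ρ_i(t, X⃗_i)`. -/
def uterm {F V : Type} [DecidableEq V] (ρ : CRule F V) (i : ℕ) (t : Term F V) :
    Term (UF F V) V :=
  .app (Sum.inr (ρ, i)) (liftF t :: (Xlist ρ i).map Term.var)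

/-- Left-hand side of the `j`-th unraveled rule of `ρ` (j = 0, …, k). -/
def ulhs {F V : Type} [DecidableEq V] (ρ : CRule F V) (j : ℕ) : Term (UF F V) V :=
  if j = 0 then liftF ρ.lhs
  else uterm ρ j (ρ.conds.getD (j - 1) (dummyCond ρ)).2

/-- Right-hand side of the `j`-th unraveled rule of `ρ` (j = 0, …, k). -/
def urhs {F V : Type} [DecidableEq V] (ρ : CRule F V) (j : ℕ) : Term (UF F V) V :=
  if j = ρ.conds.length then liftF ρ.rhs
  else uterm ρ (j + 1) (ρ.conds.getD j (dummyCond ρ)).1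

/-- The unconditional rules `U(ρ)` obtained by unraveling the rule `ρ`. -/
def URules {F V : Type} [DecidableEq V] (ρ : CRule F V) : Set (CRule (UF F V) V) :=
  { r | ∃ j ≤ ρ.conds.length, r = ⟨ulhs ρ j, urhs ρ j, []⟩ }

/-- The simultaneous unraveling `U(R)` of a DCTRS `R`. -/
def USys {F V : Type} [DecidableEq V] (R : CTRS F V) : CTRS (UF F V) V :=
  ⋃ ρ ∈ R, URules ρ

/-- `R` is ultra-WLL (`U`-WLL): every rule of `U(R)` is WLL. -/
def IsUWLL {F V : Type} [DecidableEq V] (R : CTRS F V) : Prop :=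
  ∀ r ∈ USys R, r.WLL
/-- Variables used for terms over the extended signature `F̄`: original
variables plus a countable supply of fresh variables. -/
abbrev WVar (V : Type) := V ⊕ ℕ

/-- The extended signature `F̄` of the SR transformation: the original symbols
(`c̄` for constructors, `f̄` for defined symbols, with extra arguments appended),
the fresh constant `⊥`, the fresh unary symbol `⟨·⟩`, and the fresh tuple
symbols `[ ]^ρ_j`. -/
inductive SSym (F V : Type) : Type where
  | orig : F → SSym F V
  | bot : SSym F V
  | guard : SSym F V
  | tup : CRule F V → ℕ → SSym F V

/-- Terms over the extended signature `F̄`. -/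
abbrev STerm (F V : Type) := Term (SSym F V) (WVar V)

/-- The fresh constant `⊥`. -/
def botT {F V : Type} : STerm F V := .app .bot []

/-- The fresh unary symbol `⟨·⟩`. -/
def guardT {F V : Type} (t : STerm F V) : STerm F V := .app .guard [t]

/-- `t̄`: the embedding of `t ∈ T(F,V)` into `T(F̄,V)` in which all the extra
arguments of defined symbols are filled with `⊥`.  Here `mOf f` is the number
of conditional `f`-rules (0 for constructors). -/
def barT {F V : Type} (mOf : F → ℕ) : Term F V → STerm F V
  | .var x => .var (Sum.inl x)
  | .app f ts =>
      .app (.orig f)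
        ((ts.attach.map (fun ⟨t, _⟩ => barT mOf t)) ++ List.replicate (mOf f) botT)

mutual
/-- `ext(t)`: the embedding of `t ∈ T(F,V)` into `T(F̄,V)` in which the extra
arguments of defined symbols are filled with distinct fresh variables; a
counter is threaded through to keep the fresh variables distinct. -/
def extT {F V : Type} (mOf : F → ℕ) : Term F V → ℕ → STerm F V × ℕ
  | .var x, c => (.var (Sum.inl x), c)
  | .app f ts, c =>
      let p := extTList mOf ts c
      (.app (.orig f)
         (p.1 ++ (List.range (mOf f)).map (fun k => .var (Sum.inr (p.2 + k)))),
       p.2 + mOf f)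

/-- `ext` on lists of terms, threading the fresh-variable counter. -/
def extTList {F V : Type} (mOf : F → ℕ) : List (Term F V) → ℕ → List (STerm F V) × ℕ
  | [], c => ([], c)
  | t :: ts, c =>
      let p := extT mOf t c
      let q := extTList mOf ts p.2
      (p.1 :: q.1, q.2)
end

/-- The backtranslation `t̂`: the partial mapping erasing `⟨·⟩` and the extra
arguments of defined symbols, recovering a term over `F`. -/
def hatT {F V : Type} (ar : F → ℕ) : STerm F V → Option (Term F V)
  | .var (Sum.inl x) => some (.var x)
  | .var (Sum.inr _) => none
  | .app (.orig f) ts =>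
      Option.map (Term.app f)
        ((ts.take (ar f)).attach.mapM (fun t => hatT ar t.1))
  | .app .guard [t] => hatT ar t
  | .app _ _ => none
decreasing_by
  · have h1 : t.1 ∈ ts := List.mem_of_mem_take t.2
    have := List.sizeOf_lt_of_mem h1
    simp only [Term.app.sizeOf_spec]
    omega
  · simp
    omega

/-- Embedding of `T(F,V)` into the terms over the unraveling signature
`U_R(F)` with extended variables. -/
def liftUV {F V : Type} (t : Term F V) : Term (UF F V) (WVar V) :=
  (t.mapF Sum.inl).rename Sum.inl
/-- The list `V⃗_j` enumerating `Var(t1, …, t_{j−1})` in a fixed order. -/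
def Vlist {F V : Type} [DecidableEq V] (ρ : CRule F V) (j : ℕ) : List V :=
  (((ρ.conds.take (j - 1)).map Prod.snd).flatMap Term.varList).dedup

/-- The term `[⟨inner⟩, V⃗_j]^ρ_j` (used in the rewrite rules of `SR(R)`). -/
def tupT {F V : Type} [DecidableEq V] (ρ : CRule F V) (j : ℕ) (inner : STerm F V) :
    STerm F V :=
  .app (.tup ρ j) (guardT inner :: (Vlist ρ j).map (fun v => .var (Sum.inl v)))

/-- The `j`-th unconditional rule (j = 0, …, k) obtained by the SR
transformation from the `i`-th conditional `f`-rule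
`ρ : f(w1,…,wn) → r ⇐ s1 ≈ t1, …, sk ≈ tk` (where `i = idx ρ`). -/
def condSRRule {F V : Type} [DecidableEq V] (mOf : F → ℕ) (idx : CRule F V → ℕ)
    (ρ : CRule F V) (j : ℕ) : CRule (SSym F V) (WVar V) :=
  match ρ.lhs with
  | .var _ => ⟨barT mOf ρ.lhs, barT mOf ρ.rhs, []⟩  -- irrelevant (lhs is never a variable)
  | .app f ws =>
    let i := idx ρ
    let m := mOf f
    let p := extTList mOf ws 0
    let ws' := p.1
    let c0 := p.2
    let slot : STerm F V → List (STerm F V) := fun mid =>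
      (List.range m).map (fun q => if q = i - 1 then mid else .var (Sum.inr (c0 + q)))
    let k := ρ.conds.length
    ⟨(if j = 0 then
        Term.app (SSym.orig f) (ws' ++ slot botT)
      else
        Term.app (SSym.orig f)
          (ws' ++ slot (tupT ρ j (extT mOf (ρ.conds.getD (j - 1) (dummyCond ρ)).2 (c0 + m)).1))),
     (if j = k then
        guardT (barT mOf ρ.rhs)
      else
        Term.app (SSym.orig f)
          (ws' ++ slot (tupT ρ (j + 1) (barT mOf (ρ.conds.getD j (dummyCond ρ)).1)))),
     []⟩

/-- The unconditional rule `ext(l) → ⟨r̄⟩` obtained by the SR transformation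
from an unconditional rule `l → r`. -/
def uncondSRRule {F V : Type} (mOf : F → ℕ) (ρ : CRule F V) : CRule (SSym F V) (WVar V) :=
  ⟨(extT mOf ρ.lhs 0).1, guardT (barT mOf ρ.rhs), []⟩

/-- The auxiliary rule `⟨⟨x⟩⟩ → ⟨x⟩`. -/
def auxGuard {F V : Type} : CRule (SSym F V) (WVar V) :=
  ⟨guardT (guardT (.var (Sum.inr 0))), guardT (.var (Sum.inr 0)), []⟩

/-- The auxiliary rule shifting `⟨·⟩` upward over the `i`-th argument of the
symbol `f` (and resetting the extra arguments of defined symbols):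
`f̄(x1,…,⟨xi⟩,…,xn, z1,…,zm) → ⟨f̄(x1,…,xn, ⊥,…,⊥)⟩`. -/
def auxShift {F V : Type} (ar mOf : F → ℕ) (f : F) (i : ℕ) : CRule (SSym F V) (WVar V) :=
  ⟨Term.app (SSym.orig f)
     (((List.range (ar f)).map
         (fun q => if q = i then guardT (.var (Sum.inr q)) else .var (Sum.inr q))) ++
      (List.range (mOf f)).map (fun q => .var (Sum.inr (ar f + q)))),
   guardT (Term.app (SSym.orig f)
     (((List.range (ar f)).map (fun q => Term.var (Sum.inr q))) ++
      List.replicate (mOf f) botT)),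
   []⟩

/-- The SR transformation `SR(R)`: the unconditional TRS over `F̄` consisting of
the transformed rules of `R` together with the auxiliary rules `R_aux`. -/
def SRSys {F V : Type} [DecidableEq V] (R : CTRS F V) (ar mOf : F → ℕ)
    (idx : CRule F V → ℕ) : CTRS (SSym F V) (WVar V) :=
  { r | (∃ ρ ∈ R, ρ.conds = [] ∧ r = uncondSRRule mOf ρ) ∨
        (∃ ρ ∈ R, ρ.conds ≠ [] ∧ ∃ j ≤ ρ.conds.length, r = condSRRule mOf idx ρ j) ∨
        r = auxGuard ∨
        (∃ (f : F) (i : ℕ), i < ar f ∧ r = auxShift ar mOf f i) }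

/-- Well-formedness of the data `(ar, mOf, idx)` describing the signature `F`
(with arities `ar`), the number `mOf f` of conditional `f`-rules of `R`, and
the ranking `idx` of the conditional rules of each defined symbol by some
arbitrary but fixed order. -/
def GoodSetup {F V : Type} [DecidableEq V] (R : CTRS F V) (ar mOf : F → ℕ)
    (idx : CRule F V → ℕ) : Prop :=
  (∀ ρ ∈ R, ρ.lhs.WF ar ∧ ρ.rhs.WF ar ∧ ∀ c ∈ ρ.conds, c.1.WF ar ∧ c.2.WF ar) ∧
  (∀ ρ ∈ R, ∃ (f : F) (ws : List (Term F V)), ρ.lhs = Term.app f ws) ∧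
  (∀ ρ ∈ R, ρ.conds ≠ [] →
     ∀ (f : F) (ws : List (Term F V)), ρ.lhs = Term.app f ws →
       1 ≤ idx ρ ∧ idx ρ ≤ mOf f) ∧
  (∀ ρ₁, ρ₁ ∈ R → ∀ ρ₂, ρ₂ ∈ R → ρ₁.conds ≠ [] → ρ₂.conds ≠ [] →
     ∀ (f : F) (ws₁ ws₂ : List (Term F V)),
       ρ₁.lhs = Term.app f ws₁ → ρ₂.lhs = Term.app f ws₂ →
       idx ρ₁ = idx ρ₂ → ρ₁ = ρ₂) ∧
  (∀ (f : F) (i : ℕ), 1 ≤ i → i ≤ mOf f →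
     ∃ ρ ∈ R, ρ.conds ≠ [] ∧ (∃ ws : List (Term F V), ρ.lhs = Term.app f ws) ∧ idx ρ = i)
/-- The unraveled system `U(R)` with its rules considered over the extended
variable set `WVar V` (so that it rewrites the terms in the image of `Φ`). -/
def USysW {F V : Type} [DecidableEq V] (R : CTRS F V) : CTRS (UF F V) (WVar V) :=
  { r | ∃ r' ∈ USys R, r = r'.mapV Sum.inl }

/-- Membership in the set `Φ(t)`: `PhiMem R ar mOf idx t u` states that
`u ∈ Φ(t)`, where `Φ` is the mapping (defined mutually with the auxiliary
mapping `Ψ`) from reachable terms of `T(F̄,V)` to sets of terms of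
`T(U_R(F),V)`:
* `Φ(x) = {x}` for a variable `x`;
* `Φ(⟨t⟩) = Φ(t)`;
* for an original symbol `f` applied to arguments `ts`, `Φ` contains
  `f(t'1,…,t'n)` for all `t'p ∈ Φ(tp)` of the first `ar f` arguments (this is
  the clause for constructors and the clause `Ψ(f̄(t⃗,⊥,…,⊥))` for defined
  symbols), and
* for each `i`-th extra argument of a defined symbol `f` that is a tuple
  `[⟨t'⟩, t'1,…,t'_{nj}]^ρ_j` (where `ρ` is the `i`-th conditional `f`-rule),
  `Φ` contains all terms `U^ρ_j(u', u⃗')` with `u' ∈ Φ(t')` and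
  `u⃗' ∈ Φ(σ(X⃗j))`, where `σ` is a substitution with `σ(V⃗j) = t'1,…,t'_{nj}`
  and `σ(ext(w1),…,ext(wn))` equal to the main arguments of the node. -/
inductive PhiMem {F V : Type} [DecidableEq V] (R : CTRS F V) (ar mOf : F → ℕ)
    (idx : CRule F V → ℕ) : STerm F V → Term (UF F V) (WVar V) → Prop where
  | var (x : WVar V) : PhiMem R ar mOf idx (.var x) (.var x)
  | guard {t : STerm F V} {u : Term (UF F V) (WVar V)} :
      PhiMem R ar mOf idx t u → PhiMem R ar mOf idx (guardT t) u
  | orig {f : F} {ts : List (STerm F V)} {us : List (Term (UF F V) (WVar V))} :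
      us.length = (ts.take (ar f)).length →
      (∀ p ∈ List.zip (ts.take (ar f)) us, PhiMem R ar mOf idx p.1 p.2) →
      PhiMem R ar mOf idx (.app (.orig f) ts) (.app (Sum.inl f) us)
  | cond {f : F} {ts : List (STerm F V)} {ρ : CRule F V} {ws : List (Term F V)}
      {j : ℕ} {tin : STerm F V} {vargs : List (STerm F V)}
      {σ : WVar V → STerm F V} {u : Term (UF F V) (WVar V)}
      {us : List (Term (UF F V) (WVar V))} :
      ρ ∈ R → ρ.conds ≠ [] → ρ.lhs = .app f ws →
      1 ≤ j → j ≤ ρ.conds.length →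
      (ts.drop (ar f))[idx ρ - 1]? = some (.app (.tup ρ j) (guardT tin :: vargs)) →
      (Vlist ρ j).map (fun v => σ (Sum.inl v)) = vargs →
      (extTList mOf ws 0).1.map (Term.subst σ) = ts.take (ar f) →
      PhiMem R ar mOf idx tin u →
      us.length = (Xlist ρ j).length →
      (∀ p ∈ List.zip (Xlist ρ j) us, PhiMem R ar mOf idx (σ (Sum.inl p.1)) p.2) →
      PhiMem R ar mOf idx (.app (.orig f) ts) (.app (Sum.inr (ρ, j)) (u :: us))

/-- The set `Φ(t)`. -/
def Phi {F V : Type} [DecidableEq V] (R : CTRS F V) (ar mOf : F → ℕ)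
    (idx : CRule F V → ℕ) (t : STerm F V) : Set (Term (UF F V) (WVar V)) :=
  { u | PhiMem R ar mOf idx t u }

/-- `σ' ∈ Φ(σ)`, the extension of `Φ` to substitutions:
`Dom(σ') ⊆ Dom(σ)` and `xσ' ∈ Φ(xσ)` for every `x ∈ Dom(σ)`. -/
def PhiSub {F V : Type} [DecidableEq V] (R : CTRS F V) (ar mOf : F → ℕ)
    (idx : CRule F V → ℕ) (σ : WVar V → STerm F V)
    (σ' : WVar V → Term (UF F V) (WVar V)) : Prop :=
  ∀ x : WVar V, PhiMem R ar mOf idx (σ x) (σ' x)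

/-- The relation `s ⇝ t`: for each `t' ∈ Φ(t)` there exists `s' ∈ Φ(s)` with
`s' →*_{U(R)} t'`. -/
def Leadsto {F V : Type} [DecidableEq V] (R : CTRS F V) (ar mOf : F → ℕ)
    (idx : CRule F V → ℕ) (s t : STerm F V) : Prop :=
  ∀ u, PhiMem R ar mOf idx t u →
    ∃ u', PhiMem R ar mOf idx s u' ∧ RedStar (USysW R) u' u

/-- A term of `T(F̄,V)` is reachable if it is a subterm of some term reachable
by `SR(R)` from `⟨s̄⟩` for some `s ∈ T(F,V)`. -/
def SRReachable {F V : Type} [DecidableEq V] (R : CTRS F V) (ar mOf : F → ℕ)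
    (idx : CRule F V → ℕ) (t : STerm F V) : Prop :=
  ∃ (s : Term F V) (C : Ctx (SSym F V) (WVar V)),
    s.WF ar ∧ RedStar (SRSys R ar mOf idx) (guardT (barT mOf s)) (C.fill t)

/-- The restriction `σ|_X` of a substitution to the variables of a term `t`. -/
def restrictTo {F V : Type} [DecidableEq V] (σ : WVar V → STerm F V) (t : STerm F V) :
    WVar V → STerm F V :=
  fun x => if 0 < t.count x then σ x else .var x

namespace SRProof

variable {F V W : Type}

theorem termInd {P : Term F V → Prop} (hv : ∀ x, P (.var x))
    (ha : ∀ f ts, (∀ t ∈ ts, P t) → P (.app f ts)) : ∀ t, P t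
  | .var x => hv x
  | .app f ts => ha f ts (fun t _ => termInd hv ha t)

theorem subst_app (σ : V → Term F W) (f : F) (ts : List (Term F V)) :
    (Term.app f ts).subst σ = .app f (ts.map (Term.subst σ)) := by
  simp [Term.subst]

theorem barT_app (mOf : F → ℕ) (f : F) (ts : List (Term F V)) :
    barT mOf (Term.app f ts) =
      .app (.orig f) (ts.map (barT mOf) ++ List.replicate (mOf f) botT) := by
  simp [barT]

theorem count_app [DecidableEq V] (x : V) (f : F) (ts : List (Term F V)) :
    (Term.app f ts).count x = seqCount x ts := by
  simp [Term.count, seqCount]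

theorem seqCount_pos [DecidableEq V] (x : V) (ts : List (Term F V)) :
    0 < seqCount x ts ↔ ∃ t ∈ ts, 0 < t.count x := by
  induction ts with
  | nil => simp [seqCount]
  | cons a l ih =>
    have : seqCount x (a :: l) = a.count x + seqCount x l := by simp [seqCount]
    rw [this]
    simp only [List.mem_cons, exists_eq_or_imp, ← ih]
    omega

theorem WF_subst [DecidableEq V] (ar : F → ℕ) (σ : V → Term F W) (t : Term F V) :
    t.WF ar → (∀ x, 0 < t.count x → (σ x).WF ar) → (t.subst σ).WF ar := by
  induction t using termInd with
  | hv x => intro _ h; rw [Term.subst]; exact h x (by simp [Term.count])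
  | ha f ts ih =>
    intro hw h
    rw [subst_app]
    cases hw with
    | app _ _ hl hw =>
      refine .app _ _ (by simpa using hl) ?_
      intro t ht
      obtain ⟨u, hu, rfl⟩ := List.mem_map.1 ht
      refine ih u hu (hw u hu) (fun x hx => h x ?_)
      rw [count_app, seqCount_pos]
      exact ⟨u, hu, hx⟩

theorem WF_of_subst [DecidableEq V] (ar : F → ℕ) (σ : V → Term F W) (t : Term F V) :
    (t.subst σ).WF ar → ∀ x, 0 < t.count x → (σ x).WF ar := by
  induction t using termInd with
  | hv y =>
    intro h x hx
    simp only [Term.count] at hx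
    split at hx
    · rename_i e; subst e; rwa [Term.subst] at h
    · omega
  | ha f ts ih =>
    intro hw x hx
    rw [subst_app] at hw
    rw [count_app, seqCount_pos] at hx
    obtain ⟨u, hu, hx⟩ := hx
    cases hw with
    | app _ _ hl hw => exact ih u hu (hw _ (List.mem_map_of_mem hu)) x hx

/-- The simulating substitution. -/
def tau (mOf : F → ℕ) (σ : V → Term F V) : WVar V → STerm F V :=
  Sum.elim (fun x => barT mOf (σ x)) (fun _ => botT)

theorem bot_subst (θ : WVar V → STerm F V) : (botT : STerm F V).subst θ = botT := by
  simp [botT, subst_app]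

theorem guard_subst (θ : WVar V → STerm F V) (t : STerm F V) :
    (guardT t).subst θ = guardT (t.subst θ) := by
  simp [guardT, subst_app]

theorem bar_tau (mOf : F → ℕ) (σ : V → Term F V) (t : Term F V) :
    (barT mOf t).subst (tau mOf σ) = barT mOf (t.subst σ) := by
  induction t using termInd with
  | hv x => simp [barT, Term.subst, tau]
  | ha f ts ih =>
    rw [subst_app, barT_app, barT_app, subst_app]
    simpa [bot_subst] using ih

mutual
theorem ext_tau (mOf : F → ℕ) (σ : V → Term F V) : ∀ (t : Term F V) (c : ℕ),
    (extT mOf t c).1.subst (tau mOf σ) = barT mOf (t.subst σ)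
  | .var x, c => by simp [extT, Term.subst, tau]
  | .app f ts, c => by
    have h := extList_tau mOf σ ts c
    rw [subst_app, barT_app]
    simp only [extT, subst_app, List.map_append, h, List.map_map]
    congr 2
    apply List.ext_getElem <;> simp [Term.subst, tau]

theorem extList_tau (mOf : F → ℕ) (σ : V → Term F V) : ∀ (ts : List (Term F V)) (c : ℕ),
    (extTList mOf ts c).1.map (Term.subst (tau mOf σ)) =
      (ts.map (Term.subst σ)).map (barT mOf)
  | [], c => by simp [extTList]
  | t :: ts, c => by
    have h1 := ext_tau mOf σ t c
    have h2 := extList_tau mOf σ ts (extT mOf t c).2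
    simp only [extTList, List.map_cons, h1, h2]
end

theorem red_congr {R : CTRS F V} (f : F) (pre post : List (Term F V)) {s t : Term F V}
    (h : Red R s t) : Red R (.app f (pre ++ s :: post)) (.app f (pre ++ t :: post)) := by
  obtain ⟨n, h⟩ := h
  cases n with
  | zero => exact h.elim
  | succ n => exact ⟨n + 1, CtxStep.congr h⟩

theorem star_congr {R : CTRS F V} (f : F) (pre post : List (Term F V)) {s t : Term F V}
    (h : RedStar R s t) : RedStar R (.app f (pre ++ s :: post)) (.app f (pre ++ t :: post)) := by
  induction h with
  | refl => exact .refl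
  | tail _ h ih => exact ih.tail (red_congr f pre post h)

theorem star_guard {R : CTRS (SSym F V) (WVar V)} {s t : STerm F V}
    (h : RedStar R s t) : RedStar R (guardT s) (guardT t) :=
  star_congr (SSym.guard : SSym F V) [] [] h

theorem red_rule {R : CTRS F V} (r : CRule F V) (hr : r ∈ R) (hc : r.conds = [])
    (θ : V → Term F V) : Red R (r.lhs.subst θ) (r.rhs.subst θ) :=
  ⟨1, CtxStep.root ⟨r, hr, θ, rfl, rfl, by simp [hc]⟩⟩

section main
variable [DecidableEq V] (R : CTRS F V) (ar mOf : F → ℕ) (idx : CRule F V → ℕ)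

theorem red_guard (t : STerm F V) :
    Red (SRSys R ar mOf idx) (guardT (guardT t)) (guardT t) := by
  have := red_rule (R := SRSys R ar mOf idx) auxGuard (Or.inr (Or.inr (Or.inl rfl))) rfl
    (fun _ => t)
  simpa [auxGuard, guard_subst, Term.subst] using this

theorem red_shift (f : F) (pre post : List (STerm F V)) (t : STerm F V)
    (hl : (pre ++ t :: post).length = ar f) :
    Red (SRSys R ar mOf idx)
      (.app (.orig f) ((pre ++ guardT t :: post) ++ List.replicate (mOf f) botT))
      (guardT (.app (.orig f) ((pre ++ t :: post) ++ List.replicate (mOf f) botT))) := by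
  have hi : pre.length < ar f := by rw [← hl]; simp
  have := red_rule (R := SRSys R ar mOf idx) (auxShift ar mOf f pre.length)
    (Or.inr (Or.inr (Or.inr ⟨f, _, hi, rfl⟩))) rfl
    (Sum.elim (fun _ => botT) (fun q => (pre ++ t :: post).getD q botT))
  simp only [auxShift, guard_subst, subst_app, List.map_append, List.map_map,
    List.map_replicate, bot_subst] at this
  convert this using 3
  · apply List.ext_getElem
    · rw [List.length_map, List.length_range, ← hl]; simp
    · intro q h1 h2
      have hq : q < (pre ++ t :: post).length := by simpa using h1
      simp only [List.getElem_map, List.getElem_range, Function.comp]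
      split
      · rename_i e; subst e
        simp [guard_subst, Term.subst]
      · rename_i e
        simp only [Term.subst, Sum.elim_inr]
        rw [List.getD_eq_getElem _ _ hq]
        rw [List.getElem_append, List.getElem_append]
        split
        · rfl
        · have : q - pre.length ≠ 0 := by omega
          obtain ⟨k, hk⟩ := Nat.exists_eq_succ_of_ne_zero this
          simp [hk]
  · apply List.ext_getElem
    · simp
    · intro q h1 h2
      have : (pre ++ t :: post).length ≤ ar f + q := by omega
      simp only [List.getElem_map, List.getElem_range, Function.comp, Term.subst, Sum.elim_inr]
      rw [List.getD_eq_default _ _ this]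
      simp
  · congr 1
    apply List.ext_getElem
    · rw [List.length_map, List.length_range, ← hl]
    · intro q h1 h2
      simp only [List.getElem_map, List.getElem_range, Function.comp, Term.subst, Sum.elim_inr]
      rw [List.getD_eq_getElem _ _ h1]

/-- Extra arguments with a given one in position `i - 1`. -/
def slots (m i : ℕ) (mid : STerm F V) : List (STerm F V) :=
  (List.range m).map (fun q => if q = i - 1 then mid else botT)

theorem slots_bot (m i : ℕ) : slots m i (botT : STerm F V) = List.replicate m botT := by
  apply List.ext_getElem <;> simp [slots]

theorem slots_split (m i : ℕ) (h1 : 1 ≤ i) (h2 : i ≤ m) (mid : STerm F V) :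
    slots m i mid = List.replicate (i - 1) botT ++ mid :: List.replicate (m - i) botT := by
  apply List.ext_getElem
  · simp [slots]; omega
  · intro q a b
    simp only [slots, List.getElem_map, List.getElem_range, List.getElem_append,
      List.length_replicate, List.getElem_replicate, List.getElem_cons]
    split_ifs <;> first | rfl | omega

/-- The intermediate terms of the simulation. -/
def mid (σ : V → Term F V) (ρ : CRule F V) (f : F) (ws : List (Term F V)) (j : ℕ)
    (u : STerm F V) : STerm F V :=
  .app (.orig f) ((ws.map (Term.subst σ)).map (barT mOf) ++
    slots (mOf f) (idx ρ) (.app (.tup ρ j) (guardT u :: (Vlist ρ j).map (fun v => barT mOf (σ v)))))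

theorem slot_subst (σ : V → Term F V) (m i c : ℕ) (u : STerm F V) :
    ((List.range m).map (fun q => if q = i - 1 then u else .var (Sum.inr (c + q)))).map
      (Term.subst (tau mOf σ)) = slots m i (u.subst (tau mOf σ)) := by
  simp only [slots, List.map_map]
  apply List.map_congr_left
  intro q _
  simp only [Function.comp]
  split
  · rfl
  · simp [Term.subst, tau]

theorem tup_subst (σ : V → Term F V) (ρ : CRule F V) (j : ℕ) (u : STerm F V) :
    (tupT ρ j u).subst (tau mOf σ) =
      .app (.tup ρ j) (guardT (u.subst (tau mOf σ)) ::
        (Vlist ρ j).map (fun v => barT mOf (σ v))) := by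
  simp [tupT, subst_app, guard_subst, Term.subst, tau]

theorem cond_red (σ : V → Term F V) (ρ : CRule F V) (hρ : ρ ∈ R) (hc : ρ.conds ≠ [])
    (f : F) (ws : List (Term F V)) (hl : ρ.lhs = .app f ws) (j : ℕ) (hj : j ≤ ρ.conds.length) :
    Red (SRSys R ar mOf idx)
      (if j = 0 then barT mOf (ρ.lhs.subst σ)
        else mid mOf idx σ ρ f ws j (barT mOf ((ρ.conds.getD (j - 1) (dummyCond ρ)).2.subst σ)))
      (if j = ρ.conds.length then guardT (barT mOf (ρ.rhs.subst σ))
        else mid mOf idx σ ρ f ws (j + 1)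
          (barT mOf ((ρ.conds.getD j (dummyCond ρ)).1.subst σ))) := by
  have := red_rule (R := SRSys R ar mOf idx) (condSRRule mOf idx ρ j)
    (Or.inr (Or.inl ⟨ρ, hρ, hc, j, hj, rfl⟩)) (by simp only [condSRRule]; split <;> rfl)
    (tau mOf σ)
  simp only [condSRRule] at this
  split at this
  · rename_i x e; rw [hl] at e; cases e
  · rename_i f' ws' e
    rw [hl] at e
    cases e
    convert this using 1
    · split
      · rw [hl, subst_app, barT_app, subst_app, List.map_append, extList_tau, slot_subst,
          bot_subst, slots_bot]
      · rw [subst_app, List.map_append, extList_tau, slot_subst, tup_subst, ext_tau, mid]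
    · split
      · rw [guard_subst, bar_tau]
      · rw [subst_app, List.map_append, extList_tau, slot_subst, tup_subst, bar_tau, mid]

theorem mid_star (hS : GoodSetup R ar mOf idx) (σ : V → Term F V) (ρ : CRule F V) (hρ : ρ ∈ R)
    (hc : ρ.conds ≠ [])
    (f : F) (ws : List (Term F V)) (hl : ρ.lhs = .app f ws) (j : ℕ) {u v : STerm F V}
    (h : RedStar (SRSys R ar mOf idx) (guardT u) (guardT v)) :
    RedStar (SRSys R ar mOf idx) (mid mOf idx σ ρ f ws j u) (mid mOf idx σ ρ f ws j v) := by
  obtain ⟨h1, h2⟩ := hS.2.2.1 ρ hρ hc f ws hl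
  unfold mid
  rw [slots_split _ _ h1 h2, slots_split _ _ h1 h2, ← List.append_assoc, ← List.append_assoc]
  apply star_congr
  exact star_congr _ [] _ h

theorem root_sim (hS : GoodSetup R ar mOf idx) (σ : V → Term F V) (ρ : CRule F V) (hρ : ρ ∈ R)
    (h : ∀ j < ρ.conds.length, RedStar (SRSys R ar mOf idx)
      (guardT (barT mOf ((ρ.conds.getD j (dummyCond ρ)).1.subst σ)))
      (guardT (barT mOf ((ρ.conds.getD j (dummyCond ρ)).2.subst σ)))) :
    RedStar (SRSys R ar mOf idx) (barT mOf (ρ.lhs.subst σ))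
      (guardT (barT mOf (ρ.rhs.subst σ))) := by
  by_cases hc : ρ.conds = []
  · have := red_rule (R := SRSys R ar mOf idx) (uncondSRRule mOf ρ)
      (Or.inl ⟨ρ, hρ, hc, rfl⟩) rfl (tau mOf σ)
    simp only [uncondSRRule, ext_tau, guard_subst, bar_tau] at this
    exact .single this
  · obtain ⟨f, ws, hl⟩ := hS.2.1 ρ hρ
    have hk : 0 < ρ.conds.length := List.length_pos_iff.2 hc
    have key : ∀ j, j < ρ.conds.length → RedStar (SRSys R ar mOf idx) (barT mOf (ρ.lhs.subst σ))
        (mid mOf idx σ ρ f ws (j + 1)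
          (barT mOf ((ρ.conds.getD j (dummyCond ρ)).2.subst σ))) := by
      intro j
      induction j with
      | zero =>
        intro hj
        have := cond_red R ar mOf idx σ ρ hρ hc f ws hl 0 hj.le
        rw [if_pos rfl, if_neg hj.ne] at this
        exact (Relation.ReflTransGen.single this).trans
          (mid_star R ar mOf idx hS σ ρ hρ hc f ws hl _ (h 0 hj))
      | succ j ih =>
        intro hj
        have := cond_red R ar mOf idx σ ρ hρ hc f ws hl (j + 1) hj.le
        rw [if_neg (by omega), if_neg hj.ne] at this
        exact ((ih (by omega)).tail this).trans
          (mid_star R ar mOf idx hS σ ρ hρ hc f ws hl _ (h (j + 1) hj))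
    have := cond_red R ar mOf idx σ ρ hρ hc f ws hl ρ.conds.length le_rfl
    rw [if_neg hk.ne', if_pos rfl] at this
    have k2 := key (ρ.conds.length - 1) (by omega)
    rw [Nat.sub_add_cancel hk] at k2
    exact k2.tail this

theorem level_sim (hS : GoodSetup R ar mOf idx) (hD : IsDCTRS R) (n : ℕ) :
    ∀ s t : Term F V, s.WF ar → LevelStep R n s t →
      t.WF ar ∧ RedStar (SRSys R ar mOf idx) (barT mOf s) (guardT (barT mOf t)) := by
  induction n with
  | zero => intro s t _ h; exact h.elim
  | succ n ih =>
    have star : ∀ s t : Term F V, s.WF ar → Relation.ReflTransGen (LevelStep R n) s t →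
        t.WF ar ∧ RedStar (SRSys R ar mOf idx) (guardT (barT mOf s)) (guardT (barT mOf t)) := by
      intro s t hs h
      induction h with
      | refl => exact ⟨hs, .refl⟩
      | tail _ h ih2 =>
        obtain ⟨a, b⟩ := ih _ _ ih2.1 h
        exact ⟨a, (ih2.2.trans (star_guard b)).tail (red_guard R ar mOf idx _)⟩
    intro s t hs h
    change CtxStep _ s t at h
    induction h with
    | root h =>
      obtain ⟨ρ, hρ, σ, rfl, rfl, hc⟩ := h
      obtain ⟨hdet, h3, -⟩ := hD ρ hρ
      obtain ⟨-, wr, wc⟩ := hS.1 ρ hρ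
      have hmem : ∀ j (hj : j < ρ.conds.length),
          ρ.conds.getD j (dummyCond ρ) = ρ.conds[j] := fun j hj => List.getD_eq_getElem _ _ hj
      have wfs : ∀ i, i ≤ ρ.conds.length → ∀ x,
          0 < seqCount x (ρ.lhs :: (ρ.conds.take i).map Prod.snd) → (σ x).WF ar := by
        intro i
        induction i with
        | zero =>
          intro _ x hx
          rw [seqCount_pos] at hx
          simp only [List.take_zero, List.map_nil, List.mem_singleton, exists_eq_left] at hx
          exact WF_of_subst ar σ _ hs x hx
        | succ i ihi =>
          intro hi x hx
          have hi' : i < ρ.conds.length := hi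
          rw [seqCount_pos] at hx
          obtain ⟨u, hu, hx⟩ := hx
          rw [List.take_succ_eq_append_getElem hi', List.map_append, ← List.cons_append,
            List.mem_append] at hu
          rcases hu with hu | hu
          · exact ihi hi'.le x ((seqCount_pos x _).2 ⟨u, hu, hx⟩)
          · simp only [List.map_cons, List.map_nil, List.mem_singleton] at hu
            subst hu
            have hm := List.getElem_mem hi'
            refine WF_of_subst ar σ _ (star _ _ ?_ (hc _ hm)).1 x hx
            exact WF_subst ar σ _ (wc _ hm).1 (fun y hy => ihi hi'.le y (hdet i hi' y hy))
      have wfcond : ∀ i (hi : i < ρ.conds.length), ((ρ.conds[i]).1.subst σ).WF ar :=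
        fun i hi => WF_subst ar σ _ (wc _ (List.getElem_mem hi)).1
          (fun y hy => wfs i hi.le y (hdet i hi y hy))
      refine ⟨WF_subst ar σ _ wr ?_, root_sim R ar mOf idx hS σ ρ hρ ?_⟩
      · intro x hx
        obtain ⟨u, hu, hx⟩ := (seqCount_pos x _).1 (h3 x hx)
        rcases List.mem_cons.1 hu with rfl | hu
        · exact WF_of_subst ar σ _ hs x hx
        · obtain ⟨c, hcm, hu⟩ := List.mem_flatMap.1 hu
          obtain ⟨i, hi, rfl⟩ := List.getElem_of_mem hcm
          simp only [List.mem_cons, List.not_mem_nil, or_false] at hu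
          rcases hu with rfl | rfl
          · exact WF_of_subst ar σ _ (wfcond i hi) x hx
          · exact WF_of_subst ar σ _ (star _ _ (wfcond i hi) (hc _ hcm)).1 x hx
      · intro j hj
        rw [hmem j hj]
        exact (star _ _ (wfcond j hj) (hc _ (List.getElem_mem hj))).2
    | @congr f pre post s t h ih2 =>
      cases hs with
      | app _ _ hl hw =>
        obtain ⟨a, b⟩ := ih2 (hw s (by simp))
        refine ⟨.app _ _ (by simpa using hl) ?_, ?_⟩
        · intro u hu
          simp only [List.mem_append, List.mem_cons] at hu
          rcases hu with hu | rfl | hu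
          · exact hw u (by simp [hu])
          · exact a
          · exact hw u (by simp [hu])
        · have h1 := star_congr (SSym.orig f) (pre.map (barT mOf))
            (post.map (barT mOf) ++ List.replicate (mOf f) botT) b
          have h2 := red_shift R ar mOf idx f (pre.map (barT mOf)) (post.map (barT mOf))
            (barT mOf t) (by simpa using hl)
          rw [barT_app, barT_app]
          simp only [List.map_append, List.map_cons, List.append_assoc, List.cons_append] at h1 h2 ⊢
          exact h1.tail h2

end main

end SRProof

/-- **Completeness of the SR transformation for `U`-WLL DCTRSs.**
For all terms `s, t ∈ T(F,V)`, if `s →*_R t` then `⟨s̄⟩ →*_{SR(R)} ⟨t̄⟩`. -/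
theorem SR_complete {F V : Type} [DecidableEq V]
    (R : CTRS F V) (ar mOf : F → ℕ) (idx : CRule F V → ℕ)
    (hS : GoodSetup R ar mOf idx) (hD : IsDCTRS R) (hU : IsUWLL R)
    (s t : Term F V) (hs : s.WF ar) (ht : t.WF ar)
    (h : RedStar R s t) :
    RedStar (SRSys R ar mOf idx) (guardT (barT mOf s)) (guardT (barT mOf t)) := by
  have key : t.WF ar ∧
      RedStar (SRSys R ar mOf idx) (guardT (barT mOf s)) (guardT (barT mOf t)) := by
    clear ht
    induction h with
    | refl => exact ⟨hs, .refl⟩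
    | tail _ h ih =>
      obtain ⟨n, h⟩ := h
      obtain ⟨a, b⟩ := SRProof.level_sim R ar mOf idx hS hD n _ _ ih.1 h
      exact ⟨a, (ih.2.trans (SRProof.star_guard b)).tail (SRProof.red_guard R ar mOf idx _)⟩
  exact key.2
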